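/- Assume the Setting. Then for every n ∈ {1,...,N} it holds P-almost surely that 1_{{𝒱(Y_0) ≥ c^{1/(1−α)}·θ}} · P(∩_{k=0}^{n} A_k | σ(Y_0)) ≥ inf( { p_n(v) : v ∈ ℍ_{n−1} with 𝒱(v) ≥ θ^{(α^{n−1})} } ∪ {1} ) · 1_{{𝒱(Y_0) ≥ c^{1/(1−α)}·θ}} · P(∩_{k=0}^{n−1} A_k | σ(Y_0)). -/

import Mathlib

open MeasureTheory ProbabilityTheory
open scoped ENNReal

/-!
Let `𝒢` be the `σ`-algebra generated by `Y_0` and `Z_1, ..., Z_n`. Then `Y_0, ..., Y_n` are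
`𝒢`-measurable and `Z_{n+1}` is independent of `𝒢`, so freezing `Y_n` gives
`P(A_{n+1} | 𝒢) = p_{n+1}(Y_n)` almost surely. On `{𝒱(Y_0) ≥ c^{1/(1-α)} θ} ∩ A_0 ∩ ... ∩ A_n` the
growth recursion forces `𝒱(Y_n) ≥ θ^{α^n}`, because `c^{1/(1-α)} ≥ 1` is the fixed point of
`x ↦ c x^α`; hence `p_{n+1}(Y_n)` is at least the infimum there. Conditioning on
`σ(Y_0) ⊆ 𝒢` preserves this bound by the tower property.
-/

section Independence

variable {Ω : Type*} {mΩ : MeasurableSpace Ω} {μ : Measure Ω}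

lemma generateFrom_image2_inter_measurableSet {α : Type*} (m₁ m₂ : MeasurableSpace α) :
    MeasurableSpace.generateFrom
      (Set.image2 (· ∩ ·) {s | MeasurableSet[m₁] s} {s | MeasurableSet[m₂] s}) = m₁ ⊔ m₂ := by
  refine le_antisymm (MeasurableSpace.generateFrom_le ?_) (sup_le ?_ ?_)
  · rintro _ ⟨s, hs, t, ht, rfl⟩
    exact (le_sup_left (a := m₁) s hs).inter (le_sup_right (b := m₂) t ht)
  · exact fun s hs => MeasurableSpace.measurableSet_generateFrom
      ⟨s, hs, Set.univ, MeasurableSet.univ, Set.inter_univ s⟩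
  · exact fun s hs => MeasurableSpace.measurableSet_generateFrom
      ⟨Set.univ, MeasurableSet.univ, s, hs, Set.univ_inter s⟩

lemma isPiSystem_image2_inter_measurableSet {α : Type*} (m₁ m₂ : MeasurableSpace α) :
    IsPiSystem (Set.image2 (· ∩ ·) {s | MeasurableSet[m₁] s} {s | MeasurableSet[m₂] s}) := by
  rintro _ ⟨s, hs, t, ht, rfl⟩ _ ⟨s', hs', t', ht', rfl⟩ -
  exact ⟨s ∩ s', hs.inter hs', t ∩ t', ht.inter ht', Set.inter_inter_inter_comm ..⟩

theorem indep_sup_left_of_indep_sup_right [IsZeroOrProbabilityMeasure μ]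
    {m₁ m₂ m₃ : MeasurableSpace Ω} (hm₁ : m₁ ≤ mΩ) (hm₂ : m₂ ≤ mΩ)
    (hm₃ : m₃ ≤ mΩ) (h : Indep m₁ (m₂ ⊔ m₃) μ) (h₂₃ : Indep m₂ m₃ μ) : Indep (m₁ ⊔ m₂) m₃ μ := by
  refine IndepSets.indep (sup_le hm₁ hm₂) hm₃ (isPiSystem_image2_inter_measurableSet m₁ m₂)
    (@MeasurableSpace.isPiSystem_measurableSet _ m₃)
    (generateFrom_image2_inter_measurableSet m₁ m₂).symm
    (@MeasurableSpace.generateFrom_measurableSet _ m₃).symm ?_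
  rw [IndepSets_iff]
  rw [Indep_iff] at h h₂₃
  rintro _ u ⟨s, hs, t, ht, rfl⟩ hu
  have ht' : MeasurableSet[m₂ ⊔ m₃] t := le_sup_left (a := m₂) t ht
  have hu' : MeasurableSet[m₂ ⊔ m₃] u := le_sup_right (b := m₃) u hu
  calc μ (s ∩ t ∩ u) = μ s * (μ t * μ u) := by
        rw [Set.inter_assoc, h s (t ∩ u) hs (ht'.inter hu'), h₂₃ t u ht hu]
    _ = μ (s ∩ t) * μ u := by rw [h s t hs ht', mul_assoc]

theorem indep_iSup_of_iIndep_finset {ι : Type*} {m : ι → MeasurableSpace Ω} {s t : Finset ι}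
    {j : ι} (hm : ∀ i ∈ s, m i ≤ mΩ) (h : iIndep (fun i : s => m i) μ) (hts : t ⊆ s)
    (hjs : j ∈ s) (hjt : j ∉ t) : Indep (⨆ i ∈ t, m i) (m j) μ := by
  have hdisj : Disjoint {i : s | (i : ι) ∈ t} {⟨j, hjs⟩} := by
    simpa using hjt
  have hind := indep_iSup_of_disjoint (fun i : s => hm i i.2) h hdisj
  refine indep_of_indep_of_le_left (indep_of_indep_of_le_right hind ?_) ?_
  · exact le_iSup₂_of_le (f := fun (i : s) _ => m i) ⟨j, hjs⟩ rfl le_rfl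
  · exact iSup₂_le fun i hi =>
      le_iSup₂_of_le (f := fun (i : s) _ => m i) ⟨i, hts hi⟩ hi le_rfl

end Independence

section Freezing

variable {Ω H U : Type*} [MeasurableSpace H] [mU : MeasurableSpace U]
  {m mΩ : MeasurableSpace Ω} {μ : Measure Ω} [IsFiniteMeasure μ] {Y : Ω → H} {W : Ω → U}

lemma map_restrict_prodMk_of_indep (hm : m ≤ mΩ) (hY : Measurable[m] Y) (hW : Measurable W)
    (hind : Indep m (mU.comap W) μ) {s : Set Ω} (hs : MeasurableSet[m] s) :
    (μ.restrict s).map (fun ω => (Y ω, W ω)) = ((μ.restrict s).map Y).prod (μ.map W) := by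
  have hYΩ : Measurable Y := hY.mono hm le_rfl
  refine (Measure.prod_eq fun a b ha hb => ?_).symm
  rw [Measure.map_apply (hYΩ.prodMk hW) (ha.prod hb), Measure.map_apply hYΩ ha,
    Measure.map_apply hW hb, Measure.restrict_apply (hYΩ.prodMk hW (ha.prod hb)),
    Measure.restrict_apply (hYΩ ha), Set.mk_preimage_prod, Set.inter_right_comm]
  exact (Indep_iff _ _ _).1 hind _ _ ((hY ha).inter hs) ⟨b, hb, rfl⟩

theorem condExp_prodMk_ae_eq_integral_of_indep {E : Type*} [NormedAddCommGroup E]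
    [NormedSpace ℝ E] [CompleteSpace E] (hm : m ≤ mΩ) (hY : Measurable[m] Y) (hW : Measurable W)
    (hind : Indep m (mU.comap W) μ) {f : H × U → E} (hf : StronglyMeasurable f)
    (hfi : Integrable (fun ω => f (Y ω, W ω)) μ) :
    μ[fun ω => f (Y ω, W ω) | m] =ᵐ[μ] fun ω => ∫ u, f (Y ω, u) ∂(μ.map W) := by
  have hYΩ : Measurable Y := hY.mono hm le_rfl
  have hYW : Measurable fun ω => (Y ω, W ω) := hYΩ.prodMk hW
  have hlaw {s : Set Ω} (hs : MeasurableSet[m] s) :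
      Integrable f (((μ.restrict s).map Y).prod (μ.map W)) := by
    rw [← map_restrict_prodMk_of_indep hm hY hW hind hs,
      integrable_map_measure hf.aestronglyMeasurable hYW.aemeasurable]
    exact hfi.integrableOn
  have hmeas : StronglyMeasurable fun y => ∫ u, f (y, u) ∂(μ.map W) := hf.integral_prod_right'
  have hint {s : Set Ω} (hs : MeasurableSet[m] s) :
      IntegrableOn (fun ω => ∫ u, f (Y ω, u) ∂(μ.map W)) s μ :=
    (integrable_map_measure hmeas.aestronglyMeasurable hYΩ.aemeasurable).1
      (hlaw hs).integral_prod_left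
  refine (ae_eq_condExp_of_forall_setIntegral_eq hm hfi (fun s hs _ => hint hs)
    (fun s hs _ => ?_) (hmeas.comp_measurable hY).aestronglyMeasurable).symm
  calc ∫ ω in s, ∫ u, f (Y ω, u) ∂(μ.map W) ∂μ
      = ∫ y, ∫ u, f (y, u) ∂(μ.map W) ∂((μ.restrict s).map Y) :=
        (integral_map hYΩ.aemeasurable hmeas.aestronglyMeasurable).symm
    _ = ∫ z, f z ∂((μ.restrict s).map fun ω => (Y ω, W ω)) := by
        rw [map_restrict_prodMk_of_indep hm hY hW hind hs, integral_prod _ (hlaw hs)]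
    _ = ∫ ω in s, f (Y ω, W ω) ∂μ := integral_map hYW.aemeasurable hf.aestronglyMeasurable

theorem condProb_prodMk_mem_ae_eq_of_indep (hm : m ≤ mΩ) (hY : Measurable[m] Y)
    (hW : Measurable W) (hind : Indep m (mU.comap W) μ) {T : Set (H × U)}
    (hT : MeasurableSet T) :
    μ⟦{ω | (Y ω, W ω) ∈ T} | m⟧ =ᵐ[μ] fun ω => μ.real {ω' | (Y ω, W ω') ∈ T} := by
  have hYW : Measurable fun ω => (Y ω, W ω) := (hY.mono hm le_rfl).prodMk hW
  have hfreeze := condExp_prodMk_ae_eq_integral_of_indep (E := ℝ)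
    (f := T.indicator fun _ => (1 : ℝ)) hm hY hW hind (stronglyMeasurable_const.indicator hT)
    ((integrable_const (1 : ℝ)).indicator (hYW hT))
  filter_upwards [hfreeze] with ω hω
  have hTω : MeasurableSet {u | (Y ω, u) ∈ T} := measurable_prodMk_left hT
  refine hω.trans ?_
  calc ∫ u, T.indicator (fun _ => (1 : ℝ)) (Y ω, u) ∂(μ.map W)
      = (μ.map W).real {u | (Y ω, u) ∈ T} := integral_indicator_one hTω
    _ = μ.real {ω' | (Y ω, W ω') ∈ T} := map_measureReal_apply hW hTω

end Freezing

section ConditionalProbability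

variable {Ω : Type*} {m m₂ mΩ : MeasurableSpace Ω} {μ : Measure Ω} [IsFiniteMeasure μ]
  {B D E : Set Ω}

lemma condProb_inter_ae_eq_indicator_left (hB : MeasurableSet[m] B) (hD : MeasurableSet D) :
    μ⟦B ∩ D | m⟧ =ᵐ[μ] fun ω => B.indicator (fun _ => (1 : ℝ)) ω * (μ⟦D | m⟧) ω := by
  have h := condExp_indicator ((integrable_const (1 : ℝ)).indicator (μ := μ) hD) hB
  rw [Set.indicator_indicator] at h
  filter_upwards [h] with ω hω
  by_cases hωB : ω ∈ B <;> simp [hω, hωB]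

theorem mul_condProb_le_condProb_inter {r : ℝ} (hm : m ≤ m₂) (hm₂ : m₂ ≤ mΩ)
    (hD : MeasurableSet[m₂] D) (hE : MeasurableSet E)
    (hr : ∀ᵐ ω ∂μ, ω ∈ D → r ≤ (μ⟦E | m₂⟧) ω) :
    ∀ᵐ ω ∂μ, r * (μ⟦D | m⟧) ω ≤ (μ⟦D ∩ E | m⟧) ω := by
  have hmono : r • D.indicator (fun _ => (1 : ℝ)) ≤ᵐ[μ] μ⟦D ∩ E | m₂⟧ := by
    filter_upwards [hr, condProb_inter_ae_eq_indicator_left hD hE] with ω hω hDE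
    rw [hDE]
    by_cases hωD : ω ∈ D <;> simp [hωD, hω]
  have hD_int : Integrable (D.indicator fun _ => (1 : ℝ)) μ :=
    (integrable_const (1 : ℝ)).indicator (hm₂ _ hD)
  filter_upwards [condExp_mono (m := m) (hD_int.smul r) integrable_condExp hmono,
    condExp_smul r (D.indicator fun _ => (1 : ℝ)) m,
    condExp_condExp_of_le (f := (D ∩ E).indicator fun _ => (1 : ℝ)) hm hm₂]
    with ω hle hsmul htower
  rwa [hsmul, htower] at hle

end ConditionalProbability

section Growth

variable {c α θ : ℝ}

lemma mul_rpow_rpow_one_div_one_sub (hc : 0 < c) (hα : α ≠ 1) :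
    c * (c ^ (1 / (1 - α))) ^ α = c ^ (1 / (1 - α)) := by
  have hα' : 1 - α ≠ 0 := sub_ne_zero.2 hα.symm
  calc c * (c ^ (1 / (1 - α))) ^ α = c ^ (1 + 1 / (1 - α) * α) := by
        rw [← Real.rpow_mul hc.le, Real.rpow_add hc, Real.rpow_one]
    _ = c ^ (1 / (1 - α)) := by
        congr 1
        field_simp
        ring

lemma rpow_mul_rpow_pow_le_of_superlinear_growth (hc : 0 < c) (hα₀ : 0 ≤ α) (hα₁ : α ≠ 1)
    (hθ : 0 ≤ θ) {x : ℕ → ℝ} {n : ℕ} (h0 : c ^ (1 / (1 - α)) * θ ≤ x 0)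
    (hx : ∀ k < n, c * x k ^ α ≤ x (k + 1)) : c ^ (1 / (1 - α)) * θ ^ α ^ n ≤ x n := by
  induction n with
  | zero => simpa using h0
  | succ n ih =>
    have hn := ih fun k hk => hx k (hk.trans n.lt_succ_self)
    calc c ^ (1 / (1 - α)) * θ ^ α ^ (n + 1)
        = c * (c ^ (1 / (1 - α)) * θ ^ α ^ n) ^ α := by
          rw [Real.mul_rpow (by positivity) (by positivity), ← mul_assoc,
            mul_rpow_rpow_one_div_one_sub hc hα₁, ← Real.rpow_mul hθ, pow_succ]
      _ ≤ c * x n ^ α := by gcongr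
      _ ≤ x (n + 1) := hx n n.lt_succ_self

lemma rpow_pow_le_of_superlinear_growth (hc : 0 < c) (hc1 : c ≤ 1) (hα : 1 < α)
    (hθ : 0 ≤ θ) {x : ℕ → ℝ} {n : ℕ} (h0 : c ^ (1 / (1 - α)) * θ ≤ x 0)
    (hx : ∀ k < n, c * x k ^ α ≤ x (k + 1)) : θ ^ α ^ n ≤ x n := by
  have hone : 1 ≤ c ^ (1 / (1 - α)) :=
    Real.one_le_rpow_of_pos_of_le_one_of_nonpos hc hc1
      (div_nonpos_of_nonneg_of_nonpos zero_le_one (by linarith))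
  exact (le_mul_of_one_le_left (by positivity) hone).trans
    (rpow_mul_rpow_pow_le_of_superlinear_growth hc (by linarith) hα.ne' hθ h0 hx)

end Growth

section GrowthEvents

variable {H U Ω : Type*}

/-- The one-step transitions `(v, w)` with `w ∈ K` along which `V` grows superlinearly,
`V w ≥ c (V v) ^ α`. -/
def growthTransitions (c α : ℝ) (V : H → ℝ) (K : Set H) : Set (H × H) :=
  {x | c * V x.1 ^ α ≤ V x.2 ∧ x.2 ∈ K}

/-- The event `A_n` of the paper: at time `n` the process `Y` lies in `Hs n` and, if `n ≥ 1`, it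
got there by a transition in `growthTransitions`. -/
def growthEvent (c α : ℝ) (V : H → ℝ) (Hs : ℕ → Set H) (Y : ℕ → Ω → H) : ℕ → Set Ω
  | 0 => {ω | Y 0 ω ∈ Hs 0}
  | n + 1 => {ω | (Y n ω, Y (n + 1) ω) ∈ growthTransitions c α V (Hs (n + 1))}

/-- The event `A_0 ∩ ... ∩ A_n` of superlinear growth up to time `n`. -/
def growthUpTo (c α : ℝ) (V : H → ℝ) (Hs : ℕ → Set H) (Y : ℕ → Ω → H) (n : ℕ) : Set Ω :=
  ⋂ k ∈ Finset.Iic n, growthEvent c α V Hs Y k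

/-- The one-step probability `p_n(v)` of the paper, with `W = Z_n` and `K = ℍ_n`. -/
def growthProb [MeasurableSpace Ω] (P : Measure Ω) (Φ : H → U → H) (W : Ω → U) (c α : ℝ)
    (V : H → ℝ) (K : Set H) (v : H) : ℝ≥0∞ :=
  P {ω | (v, Φ v (W ω)) ∈ growthTransitions c α V K}

variable {c α θ : ℝ} {V : H → ℝ} {K : Set H} {Hs : ℕ → Set H} {Y : ℕ → Ω → H} {n : ℕ} {ω : Ω}

lemma growthUpTo_succ : growthUpTo c α V Hs Y (n + 1) =
    growthUpTo c α V Hs Y n ∩ growthEvent c α V Hs Y (n + 1) := by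
  ext ω
  simp [growthUpTo, Nat.le_succ_iff, or_imp, forall_and]

lemma mem_of_mem_growthEvent (h : ω ∈ growthEvent c α V Hs Y n) : Y n ω ∈ Hs n := by
  cases n with
  | zero => exact h
  | succ n => exact h.2

lemma mem_and_rpow_pow_le_of_mem_growthUpTo (hc : 0 < c) (hc1 : c ≤ 1) (hα : 1 < α)
    (hθ : 0 ≤ θ) (h0 : c ^ (1 / (1 - α)) * θ ≤ V (Y 0 ω)) (h : ω ∈ growthUpTo c α V Hs Y n) :
    Y n ω ∈ Hs n ∧ θ ^ α ^ n ≤ V (Y n ω) := by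
  have hmem : ∀ k ≤ n, ω ∈ growthEvent c α V Hs Y k := by simpa [growthUpTo] using h
  exact ⟨mem_of_mem_growthEvent (hmem n le_rfl),
    rpow_pow_le_of_superlinear_growth (x := fun k => V (Y k ω)) hc hc1 hα hθ h0
      fun k hk => (hmem (k + 1) hk).1⟩

variable [MeasurableSpace H] [mU : MeasurableSpace U]

lemma measurableSet_growthTransitions (hV : Measurable V) (hK : MeasurableSet K) :
    MeasurableSet (growthTransitions c α V K) :=
  (measurableSet_le (((hV.comp measurable_fst).pow_const α).const_mul c)
    (hV.comp measurable_snd)).inter (measurable_snd hK)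

lemma measurableSet_growthEvent {_ : MeasurableSpace Ω} (hV : Measurable V)
    (hHs : MeasurableSet (Hs n)) (hY : ∀ k ≤ n, Measurable (Y k)) :
    MeasurableSet (growthEvent c α V Hs Y n) := by
  cases n with
  | zero => exact hY 0 le_rfl hHs
  | succ n =>
    exact ((hY n n.le_succ).prodMk (hY (n + 1) le_rfl)) (measurableSet_growthTransitions hV hHs)

lemma measurableSet_growthUpTo {_ : MeasurableSpace Ω} (hV : Measurable V)
    (hHs : ∀ k ≤ n, MeasurableSet (Hs k)) (hY : ∀ k ≤ n, Measurable (Y k)) :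
    MeasurableSet (growthUpTo c α V Hs Y n) :=
  Finset.measurableSet_biInter _ fun k hk =>
    have hkn : k ≤ n := Finset.mem_Iic.1 hk
    measurableSet_growthEvent hV (hHs k hkn) fun i hi => hY i (hi.trans hkn)

variable {m m₂ mΩ : MeasurableSpace Ω} {P : Measure Ω} [IsFiniteMeasure P]
  {Φ : H → U → H} {W : Ω → U}

lemma condProb_growthEvent_succ_ae_eq (hm₂ : m₂ ≤ mΩ) (hΦ : Measurable (Function.uncurry Φ))
    (hV : Measurable V) (hHs : MeasurableSet (Hs (n + 1))) (hY : Measurable[m₂] (Y n))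
    (hW : Measurable W) (hind : Indep m₂ (mU.comap W) P)
    (hrec : ∀ ω, Y (n + 1) ω = Φ (Y n ω) (W ω)) :
    P⟦growthEvent c α V Hs Y (n + 1) | m₂⟧ =ᵐ[P] fun ω =>
      (growthProb P Φ W c α V (Hs (n + 1)) (Y n ω)).toReal := by
  let T : Set (H × U) := {x | (x.1, Φ x.1 x.2) ∈ growthTransitions c α V (Hs (n + 1))}
  have hT : MeasurableSet T :=
    (measurable_fst.prodMk hΦ) (measurableSet_growthTransitions hV hHs)
  have hevent : growthEvent c α V Hs Y (n + 1) = {ω | (Y n ω, W ω) ∈ T} := by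
    simp only [growthEvent, hrec, T, Set.mem_ofPred_eq]
  rw [hevent]
  exact condProb_prodMk_mem_ae_eq_of_indep hm₂ hY hW hind hT

theorem sInf_mul_condProb_growthUpTo_le (hm : m ≤ m₂) (hm₂ : m₂ ≤ mΩ)
    (hΦ : Measurable (Function.uncurry Φ)) (hc : 0 < c) (hc1 : c ≤ 1) (hα : 1 < α) (hθ : 0 ≤ θ)
    (hV : Measurable V) (hHs : ∀ k ≤ n + 1, MeasurableSet (Hs k)) (hY0 : Measurable[m] (Y 0))
    (hY : ∀ k ≤ n, Measurable[m₂] (Y k)) (hW : Measurable W) (hind : Indep m₂ (mU.comap W) P)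
    (hrec : ∀ ω, Y (n + 1) ω = Φ (Y n ω) (W ω)) :
    ∀ᵐ ω ∂P,
      (sInf (growthProb P Φ W c α V (Hs (n + 1)) ''
          {v | v ∈ Hs n ∧ θ ^ α ^ n ≤ V v} ∪ {1})).toReal *
          {ω' | c ^ (1 / (1 - α)) * θ ≤ V (Y 0 ω')}.indicator (fun _ => (1 : ℝ)) ω *
          (P⟦growthUpTo c α V Hs Y n | m⟧) ω ≤
        {ω' | c ^ (1 / (1 - α)) * θ ≤ V (Y 0 ω')}.indicator (fun _ => (1 : ℝ)) ω *
          (P⟦growthUpTo c α V Hs Y (n + 1) | m⟧) ω := by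
  set B := {ω' | c ^ (1 / (1 - α)) * θ ≤ V (Y 0 ω')}
  set D := growthUpTo c α V Hs Y n
  set E := growthEvent c α V Hs Y (n + 1)
  set q := sInf (growthProb P Φ W c α V (Hs (n + 1)) '' {v | v ∈ Hs n ∧ θ ^ α ^ n ≤ V v} ∪ {1})
  have hB : MeasurableSet[m] B := measurableSet_le measurable_const (hV.comp hY0)
  have hD : MeasurableSet[m₂] D :=
    measurableSet_growthUpTo hV (fun k hk => hHs k (hk.trans n.le_succ)) hY
  have hYΩ : Measurable (Y n) := (hY n le_rfl).mono hm₂ le_rfl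
  have hYsucc : Measurable (Y (n + 1)) := by
    rw [funext hrec]
    exact hΦ.comp (hYΩ.prodMk hW)
  have hE : MeasurableSet E :=
    (hYΩ.prodMk hYsucc) (measurableSet_growthTransitions hV (hHs _ le_rfl))
  have hq : ∀ ω ∈ B ∩ D, q.toReal ≤ (growthProb P Φ W c α V (Hs (n + 1)) (Y n ω)).toReal :=
    fun ω ⟨hωB, hωD⟩ => ENNReal.toReal_mono (measure_ne_top P _) <| sInf_le <| Or.inl
      ⟨Y n ω, mem_and_rpow_pow_le_of_mem_growthUpTo hc hc1 hα hθ hωB hωD, rfl⟩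
  have hE_ge : ∀ᵐ ω ∂P, ω ∈ B ∩ D → q.toReal ≤ (P⟦E | m₂⟧) ω := by
    filter_upwards [condProb_growthEvent_succ_ae_eq hm₂ hΦ hV (hHs _ le_rfl) (hY n le_rfl) hW hind
      hrec] with ω hω hωBD
    exact (hq ω hωBD).trans_eq hω.symm
  rw [growthUpTo_succ]
  filter_upwards [mul_condProb_le_condProb_inter hm hm₂ ((hm B hB).inter hD) hE hE_ge,
    condProb_inter_ae_eq_indicator_left hB (hm₂ _ hD),
    condProb_inter_ae_eq_indicator_left hB ((hm₂ _ hD).inter hE)] with ω hle hBD hBDE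
  rwa [Set.inter_assoc, hBD, hBDE, ← mul_assoc] at hle

end GrowthEvents

section History

variable {H U Ω : Type*} [MeasurableSpace H] [mU : MeasurableSpace U]

/-- The `σ`-algebra generated by the initial information `m` and the noise `Z 1, ..., Z n`. -/
abbrev noiseHistory (m : MeasurableSpace Ω) (Z : ℕ → Ω → U) (n : ℕ) : MeasurableSpace Ω :=
  m ⊔ ⨆ k ∈ Finset.Icc 1 n, mU.comap (Z k)

variable {m : MeasurableSpace Ω} {Z : ℕ → Ω → U}

lemma noiseHistory_mono : Monotone (noiseHistory m Z) := fun _ _ hkn =>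
  sup_le_sup_left (biSup_mono fun _ hi => Finset.Icc_subset_Icc_right hkn hi) m

lemma measurable_noiseHistory_succ (n : ℕ) : Measurable[noiseHistory m Z (n + 1)] (Z (n + 1)) :=
  measurable_iff_comap_le.2 <| le_sup_of_le_right <|
    le_iSup₂_of_le (f := fun k _ => mU.comap (Z k)) (n + 1) (by simp) le_rfl

lemma measurable_noiseHistory_of_recursion {Φ : H → U → H} {Y : ℕ → Ω → H} {n : ℕ}
    (hΦ : Measurable (Function.uncurry Φ)) (hY0 : Measurable[m] (Y 0))
    (hrec : ∀ k < n, ∀ ω, Y (k + 1) ω = Φ (Y k ω) (Z (k + 1) ω)) :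
    Measurable[noiseHistory m Z n] (Y n) := by
  induction n with
  | zero => exact hY0.mono le_sup_left le_rfl
  | succ n ih =>
    have hYn : Measurable[noiseHistory m Z (n + 1)] (Y n) :=
      (ih fun k hk => hrec k (hk.trans n.lt_succ_self)).mono (noiseHistory_mono n.le_succ) le_rfl
    rw [funext (hrec n n.lt_succ_self)]
    exact hΦ.comp (hYn.prodMk (measurable_noiseHistory_succ n))

variable {mΩ : MeasurableSpace Ω} {μ : Measure Ω} {n N : ℕ}

lemma noiseHistory_le (hm : m ≤ mΩ) (hZ : ∀ k ∈ Finset.Icc 1 n, Measurable (Z k)) :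
    noiseHistory m Z n ≤ mΩ :=
  sup_le hm (iSup₂_le fun k hk => (hZ k hk).comap_le)

theorem indep_noiseHistory_comap_succ [IsZeroOrProbabilityMeasure μ] (hm : m ≤ mΩ)
    (hZ : ∀ k ∈ Finset.Icc 1 N, Measurable (Z k))
    (hZindep : iIndepFun (fun k : Finset.Icc 1 N => Z k) μ)
    (hmZ : Indep m (⨆ k ∈ Finset.Icc 1 N, mU.comap (Z k)) μ) (hn : n < N) :
    Indep (noiseHistory m Z n) (mU.comap (Z (n + 1))) μ := by
  have hsub : Finset.Icc 1 n ⊆ Finset.Icc 1 N := Finset.Icc_subset_Icc_right hn.le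
  have hmem : n + 1 ∈ Finset.Icc 1 N := Finset.mem_Icc.2 ⟨n.succ_pos, hn⟩
  have hZn : Indep (⨆ k ∈ Finset.Icc 1 n, mU.comap (Z k)) (mU.comap (Z (n + 1))) μ :=
    indep_iSup_of_iIndep_finset (m := fun k => mU.comap (Z k)) (fun k hk => (hZ k hk).comap_le)
      hZindep hsub hmem (by simp)
  refine indep_sup_left_of_indep_sup_right hm (iSup₂_le fun k hk => (hZ k (hsub hk)).comap_le)
    (hZ _ hmem).comap_le (indep_of_indep_of_le_right hmZ (sup_le ?_ ?_)) hZn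
  · exact biSup_mono fun k hk => hsub hk
  · exact le_iSup₂_of_le (f := fun k _ => mU.comap (Z k)) (n + 1) hmem le_rfl

end History

theorem conditional_probability_lower_step_general
    {H U Ω : Type*} [mH : MeasurableSpace H] [mU : MeasurableSpace U] [mΩ : MeasurableSpace Ω]
    (P : Measure Ω) [IsProbabilityMeasure P]
    (Φ : H → U → H) (hΦ : Measurable (Function.uncurry Φ))
    (N : ℕ) (c α θ : ℝ) (hc0 : 0 < c) (hc1 : c ≤ 1) (hα : 1 < α) (hθ : 0 ≤ θ)
    (Hs : ℕ → Set H) (hHs : ∀ n ≤ N, MeasurableSet (Hs n))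
    (Z : ℕ → Ω → U) (hZmeas : ∀ n, 1 ≤ n → n ≤ N → Measurable (Z n))
    (hZindep : iIndepFun (m := fun _ => mU) (fun n : (Finset.Icc 1 N) => Z (n : ℕ)) P)
    (Y : ℕ → Ω → H) (hY0meas : Measurable (Y 0))
    (hYrec : ∀ n, 1 ≤ n → n ≤ N → ∀ ω, Y n ω = Φ (Y (n - 1) ω) (Z n ω))
    (hYZindep : Indep (MeasurableSpace.comap (Y 0) mH)
        (⨆ n ∈ Finset.Icc 1 N, MeasurableSpace.comap (Z n) mU) P)
    (V : H → ℝ) (hV : Measurable V)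
    (A : ℕ → Set Ω)
    (hA0 : A 0 = {ω | Y 0 ω ∈ Hs 0})
    (hA : ∀ n, 1 ≤ n → n ≤ N →
        A n = {ω | c * V (Y (n - 1) ω) ^ α ≤ V (Y n ω) ∧ Y n ω ∈ Hs n})
    (p : ℕ → H → ℝ≥0∞)
    (hp : ∀ n, 1 ≤ n → n ≤ N → ∀ v : H,
        p n v = P {ω | c * V v ^ α ≤ V (Φ v (Z n ω)) ∧ Φ v (Z n ω) ∈ Hs n}) :
    ∀ n, 1 ≤ n → n ≤ N →
      ∀ᵐ ω ∂P,
        (sInf ((p n '' {v | v ∈ Hs (n - 1) ∧ θ ^ (α ^ (n - 1)) ≤ V v}) ∪ {1})).toReal *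
            Set.indicator {ω' | c ^ (1 / (1 - α)) * θ ≤ V (Y 0 ω')} (fun _ => (1 : ℝ)) ω *
            (P[Set.indicator (⋂ k ∈ Finset.Iic (n - 1), A k) (fun _ => (1 : ℝ)) |
                MeasurableSpace.comap (Y 0) mH]) ω ≤
          Set.indicator {ω' | c ^ (1 / (1 - α)) * θ ≤ V (Y 0 ω')} (fun _ => (1 : ℝ)) ω *
            (P[Set.indicator (⋂ k ∈ Finset.Iic n, A k) (fun _ => (1 : ℝ)) |
                MeasurableSpace.comap (Y 0) mH]) ω := by
  intro n hn hnN
  obtain ⟨n, rfl⟩ := Nat.exists_eq_add_of_le' hn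
  have hZ : ∀ k ∈ Finset.Icc 1 N, Measurable (Z k) := fun k hk =>
    hZmeas k (Finset.mem_Icc.1 hk).1 (Finset.mem_Icc.1 hk).2
  have hm : mH.comap (Y 0) ≤ mΩ := hY0meas.comap_le
  have hYhist : ∀ k ≤ n, Measurable[noiseHistory (mH.comap (Y 0)) Z n] (Y k) := fun k hk =>
    (measurable_noiseHistory_of_recursion hΦ (comap_measurable (Y 0)) fun i hi =>
      hYrec (i + 1) i.succ_pos (by lia)).mono (noiseHistory_mono hk) le_rfl
  have hevents : ∀ k ≤ N, A k = growthEvent c α V Hs Y k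
    | 0, _ => hA0
    | k + 1, hk => hA (k + 1) k.succ_pos hk
  have hinter : ∀ k ≤ N, ⋂ i ∈ Finset.Iic k, A i = growthUpTo c α V Hs Y k := fun k hk =>
    Set.iInter₂_congr fun i hi => hevents i ((Finset.mem_Iic.1 hi).trans hk)
  have hprob : p (n + 1) = growthProb P Φ (Z (n + 1)) c α V (Hs (n + 1)) :=
    funext (hp (n + 1) hn hnN)
  rw [Nat.add_sub_cancel, hinter n (by lia), hinter (n + 1) hnN, hprob]
  exact sInf_mul_condProb_growthUpTo_le le_sup_left
    (noiseHistory_le hm fun k hk => hZ k (Finset.Icc_subset_Icc_right (by lia) hk))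
    hΦ hc0 hc1 hα hθ hV (fun k hk => hHs k (hk.trans hnN)) (comap_measurable (Y 0)) hYhist
    (hZmeas (n + 1) hn hnN) (indep_noiseHistory_comap_succ hm hZ hZindep hYZindep hnN)
    (hYrec (n + 1) hn hnN)

/-- In the abstract Markov-chain setting, for every `n ∈ {1,...,N}` it holds `P`-almost surely
that, on the event `{𝒱(Y_0) ≥ c^{1/(1−α)}·θ}`, the conditional probability of `∩_{k=0}^{n} A_k`
given `σ(Y_0)` is at least
`inf({p_n(v) : v ∈ ℍ_{n−1}, 𝒱(v) ≥ θ^{α^{n−1}}} ∪ {1})` times the conditional probability of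
`∩_{k=0}^{n−1} A_k` given `σ(Y_0)`. -/
theorem conditional_probability_lower_step
    {H U Ω : Type*} [mH : MeasurableSpace H] [mU : MeasurableSpace U] [mΩ : MeasurableSpace Ω]
    (P : Measure Ω) [IsProbabilityMeasure P]
    (Φ : H → U → H) (hΦ : Measurable (Function.uncurry Φ))
    (N : ℕ) (hN : 1 ≤ N)
    (c α θ : ℝ) (hc0 : 0 < c) (hc1 : c ≤ 1) (hα : 1 < α) (hθ : 1 < θ)
    (Hs : ℕ → Set H) (hHs : ∀ n ≤ N, MeasurableSet (Hs n))
    (Z : ℕ → Ω → U) (hZmeas : ∀ n, 1 ≤ n → n ≤ N → Measurable (Z n))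
    (hZindep : iIndepFun (m := fun _ => mU) (fun n : (Finset.Icc 1 N) => Z (n : ℕ)) P)
    (hZid : ∀ n, 1 ≤ n → n ≤ N → P.map (Z n) = P.map (Z 1))
    (Y : ℕ → Ω → H) (hY0meas : Measurable (Y 0))
    (hYrec : ∀ n, 1 ≤ n → n ≤ N → ∀ ω, Y n ω = Φ (Y (n - 1) ω) (Z n ω))
    (hYZindep : Indep (MeasurableSpace.comap (Y 0) mH)
        (⨆ n ∈ Finset.Icc 1 N, MeasurableSpace.comap (Z n) mU) P)
    (V : H → ℝ) (hV : Measurable V) (hVpos : ∀ x, 0 ≤ V x)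
    (A : ℕ → Set Ω)
    (hA0 : A 0 = {ω | Y 0 ω ∈ Hs 0})
    (hA : ∀ n, 1 ≤ n → n ≤ N →
        A n = {ω | c * V (Y (n - 1) ω) ^ α ≤ V (Y n ω) ∧ Y n ω ∈ Hs n})
    (p : ℕ → H → ℝ≥0∞)
    (hp : ∀ n, 1 ≤ n → n ≤ N → ∀ v : H,
        p n v = P {ω | c * V v ^ α ≤ V (Φ v (Z n ω)) ∧ Φ v (Z n ω) ∈ Hs n}) :
    ∀ n, 1 ≤ n → n ≤ N →
      ∀ᵐ ω ∂P,
        (sInf ((p n '' {v | v ∈ Hs (n - 1) ∧ θ ^ (α ^ (n - 1)) ≤ V v}) ∪ {1})).toReal *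
            Set.indicator {ω' | c ^ (1 / (1 - α)) * θ ≤ V (Y 0 ω')} (fun _ => (1 : ℝ)) ω *
            (P[Set.indicator (⋂ k ∈ Finset.Iic (n - 1), A k) (fun _ => (1 : ℝ)) |
                MeasurableSpace.comap (Y 0) mH]) ω ≤
          Set.indicator {ω' | c ^ (1 / (1 - α)) * θ ≤ V (Y 0 ω')} (fun _ => (1 : ℝ)) ω *
            (P[Set.indicator (⋂ k ∈ Finset.Iic n, A k) (fun _ => (1 : ℝ)) |
                MeasurableSpace.comap (Y 0) mH]) ω :=
  conditional_probability_lower_step_general P Φ hΦ N c α θ hc0 hc1 hα (zero_le_one.trans hθ.le) Hs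
    hHs Z hZmeas hZindep Y hY0meas hYrec hYZindep V hV A hA0 hA p hp
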